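/- Suppose H_A = C^d, Alice's measurement is the full Bell state measurement {M_a = (U_a ⊗ 1)Φ+(U_a† ⊗ 1)}_{a=0}^{d²−1} with {U_a} the Heisenberg–Weyl unitaries, and the input set {ω_x} is tomographically complete. Then the generalized teleportation robustness of the resulting assemblage equals the generalized entanglement robustness of the shared state: τ_gen({σ_{a|ω_x}}) = ε_gen(ρ^{AB}). -/

import Mathlib

open Matrix ComplexOrder
open scoped Kronecker

namespace Tele

noncomputable def ptrace₁ {V B : Type*} [Fintype V]
    (M : Matrix (V × B) (V × B) ℂ) : Matrix B B ℂ :=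
  Matrix.of fun b b' => ∑ v, M (v, b) (v, b')

noncomputable def ptrace₂ {V B : Type*} [Fintype B]
    (M : Matrix (V × B) (V × B) ℂ) : Matrix V V ℂ :=
  Matrix.of fun v v' => ∑ b, M (v, b) (v', b)

noncomputable def ptraceMid {V A B : Type*} [Fintype A]
    (M : Matrix (V × A × B) (V × A × B) ℂ) : Matrix (V × B) (V × B) ℂ :=
  Matrix.of fun p q => ∑ a, M (p.1, a, p.2) (q.1, a, q.2)

noncomputable def ptraceVA {V A B : Type*} [Fintype V] [Fintype A]
    (M : Matrix (V × A × B) (V × A × B) ℂ) : Matrix B B ℂ :=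
  Matrix.of fun b b' => ∑ v, ∑ a, M (v, a, b) (v, a, b')

noncomputable def ptraceV₁A {V V₁ A B : Type*} [Fintype V₁] [Fintype A]
    (M : Matrix (V × V₁ × A × B) (V × V₁ × A × B) ℂ) : Matrix (V × B) (V × B) ℂ :=
  Matrix.of fun p q => ∑ v₁, ∑ a, M (p.1, v₁, a, p.2) (q.1, v₁, a, q.2)

def ptranspose₁ {V B : Type*} (M : Matrix (V × B) (V × B) ℂ) : Matrix (V × B) (V × B) ℂ :=
  Matrix.of fun p q => M (q.1, p.2) (p.1, q.2)

def ptranspose₂ {V B : Type*} (M : Matrix (V × B) (V × B) ℂ) : Matrix (V × B) (V × B) ℂ :=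
  Matrix.of fun p q => M (p.1, q.2) (q.1, p.2)

def Separable {V B : Type*} [Fintype V] [Fintype B]
    (M : Matrix (V × B) (V × B) ℂ) : Prop :=
  ∃ (n : ℕ) (τ : Fin n → Matrix V V ℂ) (χ : Fin n → Matrix B B ℂ),
    (∀ i, (τ i).PosSemidef) ∧ (∀ i, (χ i).PosSemidef) ∧ M = ∑ i, τ i ⊗ₖ χ i

def IsState {V : Type*} [Fintype V] (ρ : Matrix V V ℂ) : Prop :=
  ρ.PosSemidef ∧ ρ.trace = 1

noncomputable def maxEnt (d : ℕ) : Matrix (Fin d × Fin d) (Fin d × Fin d) ℂ :=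
  Matrix.of fun p q => if p.1 = p.2 ∧ q.1 = q.2 then (d : ℂ)⁻¹ else 0

noncomputable def chanOp {V A B : Type*} [Fintype V] [Fintype A] [Fintype B]
    [DecidableEq V] [DecidableEq B]
    (M : Matrix (V × A) (V × A) ℂ) (ρ : Matrix (A × B) (A × B) ℂ) :
    Matrix (V × B) (V × B) ℂ :=
  ptraceMid ((Matrix.reindex (Equiv.prodAssoc V A B) (Equiv.prodAssoc V A B)
      (M ⊗ₖ (1 : Matrix B B ℂ))) * ((1 : Matrix V V ℂ) ⊗ₖ ρ))

noncomputable def teleA {V A B : Type*} [Fintype V] [Fintype A] [Fintype B] [DecidableEq B]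
    (M : Matrix (V × A) (V × A) ℂ) (ρ : Matrix (A × B) (A × B) ℂ) (ω : Matrix V V ℂ) :
    Matrix B B ℂ :=
  ptraceVA ((Matrix.reindex (Equiv.prodAssoc V A B) (Equiv.prodAssoc V A B)
      (M ⊗ₖ (1 : Matrix B B ℂ))) * (ω ⊗ₖ ρ))

noncomputable def margOp {V A : Type*} [Fintype V] [Fintype A] [DecidableEq V]
    (M : Matrix (V × A) (V × A) ℂ) (ρA : Matrix A A ℂ) : Matrix V V ℂ :=
  ptrace₂ (M * ((1 : Matrix V V ℂ) ⊗ₖ ρA))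

noncomputable def piOp {A B : Type*} [Fintype A] [Fintype B] [DecidableEq B]
    (χ : Matrix A A ℂ) (ρ : Matrix (A × B) (A × B) ℂ) : Matrix B B ℂ :=
  ptrace₁ ((χ ⊗ₖ (1 : Matrix B B ℂ)) * ρ)

def TomoComplete {V X : Type*} [Fintype V] (ω : X → Matrix V V ℂ) : Prop :=
  ∀ H : Matrix V V ℂ, H.IsHermitian → H ∈ Submodule.span ℝ (Set.range ω)

noncomputable def shiftX (d : ℕ) : Matrix (Fin d) (Fin d) ℂ :=
  Matrix.of fun i j => if (i : ℕ) = ((j : ℕ) + 1) % d then 1 else 0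

noncomputable def clockZ (d : ℕ) : Matrix (Fin d) (Fin d) ℂ :=
  Matrix.of fun i j =>
    if i = j then Complex.exp (2 * (Real.pi : ℂ) * Complex.I * ((i : ℕ) : ℂ) / (d : ℂ)) else 0

noncomputable def HW (d : ℕ) (a : Fin d × Fin d) : Matrix (Fin d) (Fin d) ℂ :=
  shiftX d ^ (a.1 : ℕ) * clockZ d ^ (a.2 : ℕ)

noncomputable def bellPOVM (d : ℕ) (a : Fin d × Fin d) :
    Matrix (Fin d × Fin d) (Fin d × Fin d) ℂ :=
  (HW d a ⊗ₖ (1 : Matrix (Fin d) (Fin d) ℂ)) * maxEnt d *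
    ((HW d a)ᴴ ⊗ₖ (1 : Matrix (Fin d) (Fin d) ℂ))

noncomputable def negativity {A B : Type*} [Fintype A] [Fintype B]
    (ρ : Matrix (A × B) (A × B) ℂ) : ℝ :=
  sInf {t : ℝ | ∃ ρp ρm : Matrix (A × B) (A × B) ℂ,
    ρ = ρp - ρm ∧ (ptranspose₁ ρp).PosSemidef ∧ (ptranspose₁ ρm).PosSemidef ∧
    t = (ρm.trace).re}

noncomputable def epsGen {A B : Type*} [Fintype A] [Fintype B]
    (ρ : Matrix (A × B) (A × B) ℂ) : ℝ :=
  sInf {r : ℝ | 0 ≤ r ∧ ∃ ρs : Matrix (A × B) (A × B) ℂ, IsState ρs ∧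
    Separable ((((1 + r : ℝ) : ℂ))⁻¹ • (ρ + ((r : ℝ) : ℂ) • ρs))}

noncomputable def epsSep {A B : Type*} [Fintype A] [Fintype B]
    (ρ : Matrix (A × B) (A × B) ℂ) : ℝ :=
  sInf {r : ℝ | 0 ≤ r ∧ ∃ ρs : Matrix (A × B) (A × B) ℂ, IsState ρs ∧ Separable ρs ∧
    Separable ((((1 + r : ℝ) : ℂ))⁻¹ • (ρ + ((r : ℝ) : ℂ) • ρs))}

noncomputable def epsR {A B : Type*} [Fintype A] [Fintype B] [DecidableEq A] [DecidableEq B]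
    (ρ : Matrix (A × B) (A × B) ℂ) : ℝ :=
  sInf {r : ℝ | 0 ≤ r ∧
    Separable ((((1 + r : ℝ) : ℂ))⁻¹ •
      (ρ + ((r : ℝ) : ℂ) • ((Fintype.card (A × B) : ℂ)⁻¹ • (1 : Matrix (A × B) (A × B) ℂ))))}

noncomputable def epsBSA {A B : Type*} [Fintype A] [Fintype B]
    (ρ : Matrix (A × B) (A × B) ℂ) : ℝ :=
  sInf {p : ℝ | 0 ≤ p ∧ p ≤ 1 ∧ ∃ ρs σS : Matrix (A × B) (A × B) ℂ,
    IsState ρs ∧ IsState σS ∧ Separable σS ∧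
    ρ = ((p : ℝ) : ℂ) • ρs + (((1 - p : ℝ)) : ℂ) • σS}

noncomputable def tauGen {V B X ι : Type*} [Fintype V] [Fintype B] [Fintype ι]
    [DecidableEq V] [DecidableEq B]
    (ω : X → Matrix V V ℂ) (σ : ι → X → Matrix B B ℂ) : ℝ :=
  sInf {r : ℝ | 0 ≤ r ∧ ∃ (m : ℕ) (ρs : Matrix (Fin m × B) (Fin m × B) ℂ)
      (N : ι → Matrix (V × Fin m) (V × Fin m) ℂ) (Ms : ι → Matrix (V × B) (V × B) ℂ),
      IsState ρs ∧ (∀ a, (N a).PosSemidef) ∧ ((∑ a, N a) = 1) ∧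
      (∀ a, (Ms a).PosSemidef ∧ Separable (Ms a)) ∧
      (∀ a x, (((1 + r : ℝ) : ℂ))⁻¹ • (σ a x + ((r : ℝ) : ℂ) • teleA (N a) ρs (ω x)) =
        ptrace₁ (Ms a * (ω x ⊗ₖ (1 : Matrix B B ℂ)))) ∧
      (∀ x, (∑ a, Ms a) = (1 : Matrix V V ℂ) ⊗ₖ
        ((((1 + r : ℝ) : ℂ))⁻¹ •
          ((∑ a, σ a x) + ((r : ℝ) : ℂ) • ∑ a, teleA (N a) ρs (ω x))))}

noncomputable def tauCl {V B X ι : Type*} [Fintype V] [Fintype B] [Fintype ι]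
    [DecidableEq V] [DecidableEq B]
    (ω : X → Matrix V V ℂ) (σ : ι → X → Matrix B B ℂ) : ℝ :=
  sInf {r : ℝ | 0 ≤ r ∧ ∃ (Mb Ms : ι → Matrix (V × B) (V × B) ℂ),
    (∀ a, (Mb a).PosSemidef ∧ Separable (Mb a)) ∧
    (∀ a, (Ms a).PosSemidef ∧ Separable (Ms a)) ∧
    (∀ x, (∑ a, Mb a) = (1 : Matrix V V ℂ) ⊗ₖ
      (∑ a, ptrace₁ (Mb a * (ω x ⊗ₖ (1 : Matrix B B ℂ))))) ∧
    (∀ a x, (((1 + r : ℝ) : ℂ))⁻¹ •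
        (σ a x + ((r : ℝ) : ℂ) • ptrace₁ (Mb a * (ω x ⊗ₖ (1 : Matrix B B ℂ)))) =
      ptrace₁ (Ms a * (ω x ⊗ₖ (1 : Matrix B B ℂ)))) ∧
    (∀ x, (∑ a, Ms a) = (1 : Matrix V V ℂ) ⊗ₖ
      ((((1 + r : ℝ) : ℂ))⁻¹ •
        ((∑ a, σ a x) + ((r : ℝ) : ℂ) •
          ∑ a, ptrace₁ (Mb a * (ω x ⊗ₖ (1 : Matrix B B ℂ))))))}

noncomputable def tauR {V B X ι : Type*} [Fintype V] [Fintype B] [Fintype ι]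
    [DecidableEq V] [DecidableEq B]
    (ω : X → Matrix V V ℂ) (σ : ι → X → Matrix B B ℂ) : ℝ :=
  sInf {r : ℝ | 0 ≤ r ∧ ∃ (p : ι → ℝ) (Ms : ι → Matrix (V × B) (V × B) ℂ),
    (∀ a, 0 ≤ p a) ∧ ((∑ a, p a) = 1) ∧
    (∀ a, (Ms a).PosSemidef ∧ Separable (Ms a)) ∧
    (∀ a x, (((1 + r : ℝ) : ℂ))⁻¹ •
        (σ a x + ((r * p a : ℝ) : ℂ) • ((Fintype.card B : ℂ)⁻¹ • (1 : Matrix B B ℂ))) =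
      ptrace₁ (Ms a * (ω x ⊗ₖ (1 : Matrix B B ℂ)))) ∧
    (∀ x, (∑ a, Ms a) = (1 : Matrix V V ℂ) ⊗ₖ
      ((((1 + r : ℝ) : ℂ))⁻¹ •
        ((∑ a, σ a x) + ((r : ℝ) : ℂ) • ((Fintype.card B : ℂ)⁻¹ • (1 : Matrix B B ℂ)))))}

noncomputable def TW {V B X ι : Type*} [Fintype V] [Fintype B] [Fintype ι]
    [DecidableEq B]
    (ω : X → Matrix V V ℂ) (σ : ι → X → Matrix B B ℂ) : ℝ :=
  sInf {p : ℝ | 0 ≤ p ∧ p ≤ 1 ∧ ∃ (Mt Mb : ι → Matrix (V × B) (V × B) ℂ),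
    (∀ a, (Mb a).PosSemidef ∧ Separable (Mb a)) ∧
    (∀ a, (ptranspose₁ (Mt a)).PosSemidef) ∧
    (∀ x x', (∑ a, ptrace₁ (Mt a * (ω x ⊗ₖ (1 : Matrix B B ℂ)))) =
      ∑ a, ptrace₁ (Mt a * (ω x' ⊗ₖ (1 : Matrix B B ℂ)))) ∧
    (∀ a x, σ a x = ptrace₁
      ((((p : ℝ) : ℂ) • Mt a + (((1 - p : ℝ)) : ℂ) • Mb a) * (ω x ⊗ₖ (1 : Matrix B B ℂ))))}

section helpers

theorem chanOp_apply {V A B : Type*} [Fintype V] [Fintype A] [Fintype B]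
    [DecidableEq V] [DecidableEq B]
    (M : Matrix (V × A) (V × A) ℂ) (ρ : Matrix (A × B) (A × B) ℂ) (p q : V × B) :
    chanOp M ρ p q = ∑ a, ∑ a', M (p.1, a) (q.1, a') * ρ (a', p.2) (a, q.2) := by
  simp [chanOp, ptraceMid, Matrix.mul_apply, Fintype.sum_prod_type, Matrix.one_apply,
    Matrix.kroneckerMap_apply, ite_and]

theorem teleA_eq {V A B : Type*} [Fintype V] [Fintype A] [Fintype B]
    [DecidableEq V] [DecidableEq B]
    (M : Matrix (V × A) (V × A) ℂ) (ρ : Matrix (A × B) (A × B) ℂ) (ω : Matrix V V ℂ) :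
    teleA M ρ ω = ptrace₁ (chanOp M ρ * (ω ⊗ₖ (1 : Matrix B B ℂ))) := by
  ext b b'
  simp only [teleA, ptraceVA, ptrace₁, Matrix.of_apply, Matrix.mul_apply, chanOp_apply,
    Fintype.sum_prod_type]
  simp only [Matrix.reindex_apply, Matrix.submatrix_apply, Matrix.kroneckerMap_apply,
    Matrix.one_apply, Equiv.prodAssoc_symm_apply]
  simp only [mul_ite, ite_mul, mul_one, mul_zero, zero_mul, Finset.sum_ite_eq,
    Finset.sum_ite_eq', Finset.mem_univ, if_true, Finset.sum_mul]
  refine Finset.sum_congr rfl fun v _ => ?_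
  rw [Finset.sum_comm]
  refine Finset.sum_congr rfl fun v' _ => ?_
  refine Finset.sum_congr rfl fun a _ => ?_
  refine Finset.sum_congr rfl fun a' _ => ?_
  ring

theorem chanOp_add {V A B : Type*} [Fintype V] [Fintype A] [Fintype B]
    [DecidableEq V] [DecidableEq B]
    (M : Matrix (V × A) (V × A) ℂ) (ρ ρ' : Matrix (A × B) (A × B) ℂ) :
    chanOp M (ρ + ρ') = chanOp M ρ + chanOp M ρ' := by
  ext p q
  simp [chanOp_apply, mul_add, Finset.sum_add_distrib]

theorem chanOp_smul {V A B : Type*} [Fintype V] [Fintype A] [Fintype B]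
    [DecidableEq V] [DecidableEq B] (c : ℂ)
    (M : Matrix (V × A) (V × A) ℂ) (ρ : Matrix (A × B) (A × B) ℂ) :
    chanOp M (c • ρ) = c • chanOp M ρ := by
  ext p q
  simp only [chanOp_apply, Matrix.smul_apply, smul_eq_mul, Finset.mul_sum]
  refine Finset.sum_congr rfl fun a _ => Finset.sum_congr rfl fun a' _ => ?_
  ring

theorem chanOp_sum_left {V A B ι : Type*} [Fintype V] [Fintype A] [Fintype B] [Fintype ι]
    [DecidableEq V] [DecidableEq B]
    (M : ι → Matrix (V × A) (V × A) ℂ) (ρ : Matrix (A × B) (A × B) ℂ) :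
    ∑ i, chanOp (M i) ρ = chanOp (∑ i, M i) ρ := by
  ext p q
  simp only [chanOp_apply, Matrix.sum_apply, Finset.sum_mul]
  rw [Finset.sum_comm]
  refine Finset.sum_congr rfl fun a _ => ?_
  rw [Finset.sum_comm]

theorem chanOp_one {V A B : Type*} [Fintype V] [Fintype A] [Fintype B]
    [DecidableEq V] [DecidableEq A] [DecidableEq B] (ρ : Matrix (A × B) (A × B) ℂ) :
    chanOp (1 : Matrix (V × A) (V × A) ℂ) ρ = (1 : Matrix V V ℂ) ⊗ₖ ptrace₁ ρ := by
  ext p q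
  simp [chanOp_apply, Matrix.one_apply, ptrace₁, Matrix.kroneckerMap_apply, ite_and]

theorem ptrace_add {V B : Type*} [Fintype V] (M N : Matrix (V × B) (V × B) ℂ) :
    ptrace₁ (M + N) = ptrace₁ M + ptrace₁ N := by
  ext b b'
  simp [ptrace₁, Finset.sum_add_distrib]

theorem ptrace_smul {V B : Type*} [Fintype V] (c : ℂ) (M : Matrix (V × B) (V × B) ℂ) :
    ptrace₁ (c • M) = c • ptrace₁ M := by
  ext b b'
  simp [ptrace₁, Finset.mul_sum]

theorem ptrace_kron {V B : Type*} [Fintype V] [Fintype B] [DecidableEq V] [DecidableEq B]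
    (R : Matrix B B ℂ) (ω : Matrix V V ℂ) :
    ptrace₁ (((1 : Matrix V V ℂ) ⊗ₖ R) * (ω ⊗ₖ (1 : Matrix B B ℂ))) = ω.trace • R := by
  rw [← Matrix.mul_kronecker_mul]
  ext b b'
  simp [ptrace₁, Matrix.trace, Matrix.kroneckerMap_apply, Finset.sum_mul]

theorem sum_teleA {V A B ι : Type*} [Fintype V] [Fintype A] [Fintype B] [Fintype ι]
    [DecidableEq V] [DecidableEq A] [DecidableEq B]
    (M : ι → Matrix (V × A) (V × A) ℂ) (hM : ∑ i, M i = 1) (ρ : Matrix (A × B) (A × B) ℂ)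
    (ω : Matrix V V ℂ) (hω : ω.trace = 1) :
    ∑ i, teleA (M i) ρ ω = ptrace₁ ρ := by
  have h1 : ∑ i, teleA (M i) ρ ω =
      ptrace₁ ((∑ i, chanOp (M i) ρ) * (ω ⊗ₖ (1 : Matrix B B ℂ))) := by
    simp only [teleA_eq]
    ext b b'
    simp only [ptrace₁, Matrix.sum_apply, Matrix.of_apply, Finset.sum_mul]
    rw [Finset.sum_comm]
  rw [h1, chanOp_sum_left, hM, chanOp_one, ptrace_kron, hω, one_smul]

theorem tomo_inj {V B X : Type*} [Fintype V] [Fintype B] [DecidableEq V] [DecidableEq B]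
    (ω : X → Matrix V V ℂ) (htomo : TomoComplete ω) (M N : Matrix (V × B) (V × B) ℂ)
    (h : ∀ x, ptrace₁ (M * (ω x ⊗ₖ (1 : Matrix B B ℂ))) =
      ptrace₁ (N * (ω x ⊗ₖ (1 : Matrix B B ℂ)))) : M = N := by
  let f : Matrix (V × B) (V × B) ℂ → Matrix V V ℂ →ₗ[ℂ] Matrix B B ℂ := fun M =>
    { toFun := fun W => ptrace₁ (M * (W ⊗ₖ (1 : Matrix B B ℂ)))
      map_add' := fun a b => by rw [Matrix.add_kronecker, mul_add, ptrace_add]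
      map_smul' := fun c a => by
        rw [Matrix.smul_kronecker, Matrix.mul_smul, ptrace_smul]; rfl }
  have hH : ∀ H : Matrix V V ℂ, H.IsHermitian → f M H = f N H := by
    intro H hH
    have hm := htomo H hH
    clear hH
    induction hm using Submodule.span_induction with
    | mem x hx => obtain ⟨y, rfl⟩ := hx; exact h y
    | zero => simp
    | add x y _ _ hx hy =>
      rw [map_add, map_add, hx, hy]
    | smul a x _ hx =>
      rw [LinearMap.map_smul_of_tower, LinearMap.map_smul_of_tower, hx]
  have hall : ∀ H : Matrix V V ℂ, f M H = f N H := by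
    intro H
    have e : H = (1 / 2 : ℂ) • (H + Hᴴ) + (-(Complex.I) / 2) • (Complex.I • (H - Hᴴ)) := by
      ext i j
      simp only [Matrix.add_apply, Matrix.sub_apply, Matrix.smul_apply, smul_eq_mul,
        Matrix.conjTranspose_apply]
      linear_combination ((1/2) * (H i j - star (H j i))) * Complex.I_mul_I
    have h1 : (H + Hᴴ).IsHermitian := by
      simp [Matrix.IsHermitian, add_comm]
    have h2 : (Complex.I • (H - Hᴴ)).IsHermitian := by
      simp [Matrix.IsHermitian, Matrix.conjTranspose_smul, smul_sub]
      abel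
    rw [e, map_add, map_add, map_smul (f M) (1 / 2 : ℂ), map_smul (f N) (1 / 2 : ℂ),
      map_smul (f M) (-(Complex.I) / 2), map_smul (f N) (-(Complex.I) / 2), hH _ h1, hH _ h2]
  ext ⟨v, b⟩ ⟨v', b'⟩
  have := congrFun (congrFun (hall (Matrix.single v' v 1)) b) b'
  simpa [f, ptrace₁, Matrix.mul_apply, Fintype.sum_prod_type, Matrix.kroneckerMap_apply,
    Matrix.single_apply, Matrix.one_apply, ite_and] using this

theorem sum3 {α β γ : Type*} [Fintype α] [Fintype β] [Fintype γ] (f : α → β → γ → ℂ) :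
    ∑ a, ∑ x, ∑ y, f a x y = ∑ x, ∑ y, ∑ a, f a x y := by
  rw [Finset.sum_comm]
  refine Finset.sum_congr rfl fun x _ => ?_
  rw [Finset.sum_comm]

theorem posSemidef_ptranspose_chanOp {V A B : Type*} [Fintype V] [Fintype A] [Fintype B]
    [DecidableEq V] [DecidableEq A] [DecidableEq B]
    (N : Matrix (V × A) (V × A) ℂ) (ρ : Matrix (A × B) (A × B) ℂ)
    (hN : N.PosSemidef) (hρ : ρ.PosSemidef) : (ptranspose₁ (chanOp N ρ)).PosSemidef := by
  obtain ⟨k, C, rfl⟩ := Matrix.posSemidef_iff_eq_sum_vecMulVec.mp hN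
  obtain ⟨l, D, rfl⟩ := Matrix.posSemidef_iff_eq_sum_vecMulVec.mp hρ
  let G : Matrix (V × B) (Fin k × Fin l) ℂ := Matrix.of fun p i =>
    ∑ a, star (C i.1 (p.1, a)) * D i.2 (a, p.2)
  have : ptranspose₁ (chanOp (∑ i, vecMulVec (C i) (star (C i)))
      (∑ i, vecMulVec (D i) (star (D i)))) = G * Gᴴ := by
    ext p q
    simp only [ptranspose₁, chanOp_apply, Matrix.of_apply, Matrix.sum_apply, vecMulVec_apply,
      Matrix.mul_apply, Matrix.conjTranspose_apply, G, star_sum,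
      Fintype.sum_prod_type, star_mul, star_star, Pi.star_apply]
    have e1 : ∀ a a' : A, (∑ c, C c (q.1, a) * star (C c (p.1, a'))) *
        (∑ c, D c (a', p.2) * star (D c (a, q.2))) = ∑ x : Fin k, ∑ y : Fin l,
        star (C x (p.1, a')) * D y (a', p.2) * (star (D y (a, q.2)) * C x (q.1, a)) := by
      intro a a'
      rw [Finset.sum_mul_sum]
      refine Finset.sum_congr rfl fun x _ => Finset.sum_congr rfl fun y _ => ?_
      ring
    simp only [e1]
    simp only [Finset.sum_mul_sum]
    rw [Finset.sum_comm]
    have e2 : ∀ a' : A, ∑ a : A, ∑ x : Fin k, ∑ y : Fin l,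
        star (C x (p.1, a')) * D y (a', p.2) * (star (D y (a, q.2)) * C x (q.1, a)) =
        ∑ x : Fin k, ∑ y : Fin l, ∑ a : A,
        star (C x (p.1, a')) * D y (a', p.2) * (star (D y (a, q.2)) * C x (q.1, a)) :=
      fun a' => sum3 _
    simp only [e2]
    exact sum3 _
  rw [this]
  exact Matrix.posSemidef_self_mul_conjTranspose G

/-- local conjugation -/
noncomputable def cj {V B : Type*} [Fintype V] [Fintype B] [DecidableEq B]
    (U : Matrix V V ℂ) (M : Matrix (V × B) (V × B) ℂ) : Matrix (V × B) (V × B) ℂ :=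
  (U ⊗ₖ (1 : Matrix B B ℂ)) * M * (Uᴴ ⊗ₖ (1 : Matrix B B ℂ))

theorem cj_apply {V B : Type*} [Fintype V] [Fintype B] [DecidableEq B]
    (U : Matrix V V ℂ) (M : Matrix (V × B) (V × B) ℂ) (p q : V × B) :
    cj U M p q = ∑ l, ∑ k, U p.1 k * M (k, p.2) (l, q.2) * star (U q.1 l) := by
  simp [cj, Matrix.mul_apply, Fintype.sum_prod_type, Matrix.one_apply,
    Matrix.kroneckerMap_apply, Finset.sum_mul]

theorem cj_add {V B : Type*} [Fintype V] [Fintype B] [DecidableEq B]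
    (U : Matrix V V ℂ) (M N : Matrix (V × B) (V × B) ℂ) :
    cj U (M + N) = cj U M + cj U N := by
  simp [cj, mul_add, add_mul]

theorem cj_smul {V B : Type*} [Fintype V] [Fintype B] [DecidableEq B] (c : ℂ)
    (U : Matrix V V ℂ) (M : Matrix (V × B) (V × B) ℂ) :
    cj U (c • M) = c • cj U M := by
  simp [cj]

theorem cj_cj {V B : Type*} [Fintype V] [Fintype B] [DecidableEq V] [DecidableEq B]
    (U : Matrix V V ℂ) (hU : Uᴴ * U = 1) (M : Matrix (V × B) (V × B) ℂ) :
    cj Uᴴ (cj U M) = M := by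
  have h : (Uᴴ ⊗ₖ (1 : Matrix B B ℂ)) * (U ⊗ₖ (1 : Matrix B B ℂ)) = 1 := by
    rw [← Matrix.mul_kronecker_mul, hU, one_mul, Matrix.one_kronecker_one]
  simp only [cj, conjTranspose_conjTranspose]
  calc _ = ((Uᴴ ⊗ₖ (1 : Matrix B B ℂ)) * (U ⊗ₖ (1 : Matrix B B ℂ))) * M *
        ((Uᴴ ⊗ₖ (1 : Matrix B B ℂ)) * (U ⊗ₖ (1 : Matrix B B ℂ))) := by
        simp only [Matrix.mul_assoc]
    _ = M := by rw [h, one_mul, mul_one]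

theorem trace_cj {V B : Type*} [Fintype V] [Fintype B] [DecidableEq V] [DecidableEq B]
    (U : Matrix V V ℂ) (hU : Uᴴ * U = 1) (M : Matrix (V × B) (V × B) ℂ) :
    (cj U M).trace = M.trace := by
  have h : (Uᴴ ⊗ₖ (1 : Matrix B B ℂ)) * (U ⊗ₖ (1 : Matrix B B ℂ)) = 1 := by
    rw [← Matrix.mul_kronecker_mul, hU, one_mul, Matrix.one_kronecker_one]
  rw [cj, Matrix.trace_mul_comm, ← Matrix.mul_assoc, h, one_mul]

theorem ptranspose_cj {V B : Type*} [Fintype V] [Fintype B] [DecidableEq B]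
    (U : Matrix V V ℂ) (M : Matrix (V × B) (V × B) ℂ) :
    ptranspose₁ (cj U M) = cj (Uᴴᵀ) (ptranspose₁ M) := by
  ext p q
  simp only [ptranspose₁, cj_apply, Matrix.of_apply, Matrix.transpose_apply,
    Matrix.conjTranspose_apply, star_star]
  rw [Finset.sum_comm]
  refine Finset.sum_congr rfl fun a _ => Finset.sum_congr rfl fun a' _ => ?_
  ring

theorem posSemidef_cj {V B : Type*} [Fintype V] [Fintype B] [DecidableEq B]
    (U : Matrix V V ℂ) (M : Matrix (V × B) (V × B) ℂ) (hM : M.PosSemidef) :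
    (cj U M).PosSemidef := by
  have := hM.mul_mul_conjTranspose_same (U ⊗ₖ (1 : Matrix B B ℂ))
  rwa [Matrix.conjTranspose_kronecker, Matrix.conjTranspose_one] at this

theorem trace_ptranspose {V B : Type*} [Fintype V] [Fintype B]
    (M : Matrix (V × B) (V × B) ℂ) : (ptranspose₁ M).trace = M.trace := by
  simp [ptranspose₁, Matrix.trace]

theorem separable_of {V B ι : Type*} [Fintype V] [Fintype B] [Fintype ι]
    (τ : ι → Matrix V V ℂ) (χ : ι → Matrix B B ℂ) (h1 : ∀ i, (τ i).PosSemidef)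
    (h2 : ∀ i, (χ i).PosSemidef) : Separable (∑ i, τ i ⊗ₖ χ i) := by
  let e := (Fintype.equivFin ι).symm
  exact ⟨Fintype.card ι, fun i => τ (e i), fun i => χ (e i), fun i => h1 _, fun i => h2 _,
    (Equiv.sum_comp e fun i => τ i ⊗ₖ χ i).symm⟩

theorem Separable.sum' {V B ι : Type*} [Fintype V] [Fintype B] [Fintype ι]
    (M : ι → Matrix (V × B) (V × B) ℂ) (h : ∀ i, Separable (M i)) : Separable (∑ i, M i) := by
  choose n τ χ h1 h2 h3 using h
  have : ∑ i, M i = ∑ j : (Σ i, Fin (n i)), τ j.1 j.2 ⊗ₖ χ j.1 j.2 := by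
    rw [Fintype.sum_sigma]
    exact Finset.sum_congr rfl fun i _ => h3 i
  rw [this]
  exact separable_of _ _ (fun j => h1 _ _) (fun j => h2 _ _)

theorem Separable.smul' {V B : Type*} [Fintype V] [Fintype B]
    {M : Matrix (V × B) (V × B) ℂ} (h : Separable M) (c : ℂ) (hc : 0 ≤ c) :
    Separable (c • M) := by
  obtain ⟨n, τ, χ, h1, h2, rfl⟩ := h
  refine ⟨n, fun i => c • τ i, χ, fun i => (h1 i).smul hc, h2, ?_⟩
  simp [Finset.smul_sum, Matrix.smul_kronecker]

theorem Separable.cj' {V B : Type*} [Fintype V] [Fintype B] [DecidableEq B]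
    {M : Matrix (V × B) (V × B) ℂ} (h : Separable M) (U : Matrix V V ℂ) :
    Separable (cj U M) := by
  obtain ⟨n, τ, χ, h1, h2, rfl⟩ := h
  refine ⟨n, fun i => U * τ i * Uᴴ, χ, fun i => (h1 i).mul_mul_conjTranspose_same U, h2, ?_⟩
  simp [cj, Finset.mul_sum, Finset.sum_mul, ← Matrix.mul_kronecker_mul]

theorem Separable.pt' {V B : Type*} [Fintype V] [Fintype B]
    {M : Matrix (V × B) (V × B) ℂ} (h : Separable M) :
    Separable (ptranspose₁ M) := by
  obtain ⟨n, τ, χ, h1, h2, rfl⟩ := h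
  refine ⟨n, fun i => (τ i)ᵀ, χ, fun i => (h1 i).transpose, h2, ?_⟩
  ext p q
  simp [ptranspose₁, Matrix.sum_apply, Matrix.kroneckerMap_apply]

theorem Separable.posSemidef' {V B : Type*} [Fintype V] [Fintype B]
    {M : Matrix (V × B) (V × B) ℂ} (h : Separable M) : M.PosSemidef := by
  classical
  obtain ⟨n, τ, χ, h1, h2, rfl⟩ := h
  exact Matrix.posSemidef_sum _ fun i _ => (h1 i).kronecker (h2 i)

theorem bell_apply (d : ℕ) (a p q : Fin d × Fin d) :
    bellPOVM d a p q = (d : ℂ)⁻¹ * (HW d a p.1 p.2 * star (HW d a q.1 q.2)) := by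
  change cj (HW d a) (maxEnt d) p q = _
  rw [cj_apply]
  simp [maxEnt, ite_and]
  ring

theorem bell_psd (d : ℕ) (a : Fin d × Fin d) : (bellPOVM d a).PosSemidef := by
  have : bellPOVM d a = (d : ℂ)⁻¹ • vecMulVec (fun p : Fin d × Fin d => HW d a p.1 p.2)
      (star fun p : Fin d × Fin d => HW d a p.1 p.2) := by
    ext p q
    simp [bell_apply, vecMulVec_apply]
  rw [this]
  exact (Matrix.posSemidef_vecMulVec_self_star _).smul (by positivity)

theorem chanOp_bell {B : Type*} [Fintype B] [DecidableEq B] (d : ℕ) (a : Fin d × Fin d)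
    (ρ : Matrix (Fin d × B) (Fin d × B) ℂ) :
    chanOp (bellPOVM d a) ρ = (d : ℂ)⁻¹ • cj (HW d a) (ptranspose₁ ρ) := by
  ext p q
  simp only [chanOp_apply, bell_apply, Matrix.smul_apply, cj_apply, ptranspose₁, Matrix.of_apply,
    smul_eq_mul, Finset.mul_sum]
  rw [Finset.sum_comm]
  refine Finset.sum_congr rfl fun a _ => Finset.sum_congr rfl fun a' _ => ?_
  ring

theorem shift_pow (n : ℕ) (p : ℕ) (i j : Fin (n + 1)) :
    (shiftX (n + 1) ^ p) i j = if (i : ℕ) = ((j : ℕ) + p) % (n + 1) then 1 else 0 := by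
  induction p generalizing i with
  | zero =>
    rw [pow_zero, Matrix.one_apply, add_zero, Nat.mod_eq_of_lt j.2]
    simp [Fin.ext_iff]
  | succ p ih =>
    rw [pow_succ', Matrix.mul_apply]
    have h : ∀ k : Fin (n + 1), ((k : ℕ) = ((j : ℕ) + p) % (n + 1)) ↔
        k = ⟨((j : ℕ) + p) % (n + 1), Nat.mod_lt _ n.succ_pos⟩ := fun k => by
      rw [Fin.ext_iff]
    simp only [ih, h, mul_ite, mul_one, mul_zero, Finset.sum_ite_eq', Finset.mem_univ, if_true]
    simp [shiftX, add_assoc]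

theorem clock_pow (d : ℕ) (p : ℕ) (i j : Fin d) :
    (clockZ d ^ p) i j = if i = j then
      Complex.exp (2 * (Real.pi : ℂ) * Complex.I / (d : ℂ)) ^ ((i : ℕ) * p) else 0 := by
  have h : clockZ d = Matrix.diagonal fun i : Fin d =>
      Complex.exp (2 * (Real.pi : ℂ) * Complex.I / (d : ℂ)) ^ (i : ℕ) := by
    ext i j
    rw [Matrix.diagonal_apply]
    simp only [clockZ, Matrix.of_apply]
    rw [← Complex.exp_nat_mul]
    congr 2
    ring
  rw [h, Matrix.diagonal_pow, Matrix.diagonal_apply]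
  simp [pow_mul]

theorem HW_apply (n : ℕ) (a : Fin (n + 1) × Fin (n + 1)) (i j : Fin (n + 1)) :
    HW (n + 1) a i j = if i = j + a.1 then
      Complex.exp (2 * (Real.pi : ℂ) * Complex.I / ((n + 1 : ℕ) : ℂ)) ^ ((j : ℕ) * (a.2 : ℕ))
      else 0 := by
  rw [HW, Matrix.mul_apply]
  simp only [shift_pow, clock_pow, mul_ite, mul_zero, Finset.sum_ite_eq', Finset.mem_univ,
    if_true, ite_mul, one_mul, zero_mul]
  simp only [Fin.ext_iff, Fin.val_add]

theorem zeta_star (d : ℕ) : star (Complex.exp (2 * (Real.pi : ℂ) * Complex.I / (d : ℂ))) =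
    (Complex.exp (2 * (Real.pi : ℂ) * Complex.I / (d : ℂ)))⁻¹ := by
  rw [← Complex.exp_neg, Complex.star_def, ← Complex.exp_conj]
  congr 1
  have h2 : (starRingEnd ℂ) (2 : ℂ) = 2 := Complex.conj_ofNat 2
  simp only [map_div₀, map_mul, h2, Complex.conj_ofReal, Complex.conj_I, Complex.conj_natCast]
  ring

theorem HW_unitary (n : ℕ) (a : Fin (n + 1) × Fin (n + 1)) :
    (HW (n + 1) a)ᴴ * HW (n + 1) a = 1 := by
  ext j j'
  rw [Matrix.mul_apply, Matrix.one_apply]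
  simp only [Matrix.conjTranspose_apply, HW_apply, mul_ite, mul_zero, Finset.sum_ite_eq',
    Finset.sum_ite_eq, Finset.mem_univ, if_true]
  by_cases h : j = j'
  · subst h
    simp only [if_true]
    rw [star_pow, zeta_star, inv_pow, inv_mul_cancel₀]
    exact pow_ne_zero _ (Complex.exp_ne_zero _)
  · have : ¬ (j' + a.1 = j + a.1) := fun h' => h (add_right_cancel h').symm
    simp [h, this]

theorem HW_twirl (n : ℕ) (i j i' j' : Fin (n + 1)) :
    ∑ a, HW (n + 1) a i j * star (HW (n + 1) a i' j') =
      if i = i' ∧ j = j' then ((n + 1 : ℕ) : ℂ) else 0 := by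
  have hz := Complex.isPrimitiveRoot_exp (n + 1) n.succ_ne_zero
  have hs := zeta_star (n + 1)
  simp only [HW_apply]
  set z := Complex.exp (2 * (Real.pi : ℂ) * Complex.I / ((n + 1 : ℕ) : ℂ)) with hzdef
  have hz0 : z ≠ 0 := Complex.exp_ne_zero _
  have key : ∑ q : Fin (n + 1), z ^ ((j : ℕ) * (q : ℕ)) * star (z ^ ((j' : ℕ) * (q : ℕ))) =
      if j = j' then ((n + 1 : ℕ) : ℂ) else 0 := by
    have e : ∀ q : Fin (n + 1), z ^ ((j : ℕ) * (q : ℕ)) * star (z ^ ((j' : ℕ) * (q : ℕ))) =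
        (z ^ (j : ℕ) * (z ^ (j' : ℕ))⁻¹) ^ (q : ℕ) := fun q => by
      rw [star_pow, hs, mul_pow, pow_mul, inv_pow, inv_pow, pow_mul z (j' : ℕ)]
    simp only [e]
    by_cases h : j = j'
    · subst h
      rw [mul_inv_cancel₀ (pow_ne_zero _ hz0)]
      simp
    · rw [if_neg h, Fin.sum_univ_eq_sum_range fun q => (z ^ (j : ℕ) * (z ^ (j' : ℕ))⁻¹) ^ q]
      have h1 : z ^ (j : ℕ) * (z ^ (j' : ℕ))⁻¹ - 1 ≠ 0 := by
        intro h0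
        apply h
        have h2 : z ^ (j : ℕ) = z ^ (j' : ℕ) := by
          have := pow_ne_zero (j' : ℕ) hz0
          have h5 := sub_eq_zero.mp h0
          rwa [← div_eq_mul_inv, div_eq_one_iff_eq this] at h5
        exact Fin.ext (hz.pow_inj j.2 j'.2 h2)
      have h3 : (z ^ (j : ℕ) * (z ^ (j' : ℕ))⁻¹) ^ (n + 1) = 1 := by
        rw [mul_pow, inv_pow, ← pow_mul, ← pow_mul, mul_comm (j : ℕ), mul_comm (j' : ℕ),
          pow_mul, pow_mul, hz.pow_eq_one]
        simp
      have h4 := mul_geom_sum (z ^ (j : ℕ) * (z ^ (j' : ℕ))⁻¹) (n + 1)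
      rw [h3, sub_self] at h4
      exact (mul_eq_zero.mp h4).resolve_left h1
  rw [Fintype.sum_prod_type]
  have e2 : ∀ p : Fin (n + 1), ∑ q : Fin (n + 1),
      (if i = j + p then z ^ ((j : ℕ) * (q : ℕ)) else 0) *
        star (if i' = j' + p then z ^ ((j' : ℕ) * (q : ℕ)) else 0) =
      if p = i - j then (if i' = j' + (i - j) then
        (if j = j' then ((n + 1 : ℕ) : ℂ) else 0) else 0) else 0 := by
    intro p
    rw [← key]
    by_cases hp : p = i - j
    · subst hp
      by_cases h' : i' = j' + (i - j)
      · simp [h']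
      · simp [h']
    · have : ¬ (i = j + p) := fun h' => hp (by rw [h']; abel)
      simp [hp, this]
  simp only [e2, Finset.sum_ite_eq', Finset.mem_univ, if_true]
  by_cases h : j = j'
  · subst h
    simp [eq_comm]
  · simp [h]

theorem bell_sum (n : ℕ) : ∑ a, bellPOVM (n + 1) a = 1 := by
  ext p q
  have hn : ((n + 1 : ℕ) : ℂ) ≠ 0 := by exact_mod_cast n.succ_ne_zero
  rw [Matrix.sum_apply]
  simp only [bell_apply]
  rw [← Finset.mul_sum, HW_twirl, Matrix.one_apply]
  simp only [Prod.ext_iff]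
  split_ifs
  · exact inv_mul_cancel₀ hn
  · simp

theorem pt_add {V B : Type*} (M N : Matrix (V × B) (V × B) ℂ) :
    ptranspose₁ (M + N) = ptranspose₁ M + ptranspose₁ N := by
  ext p q
  simp [ptranspose₁]

theorem pt_smul {V B : Type*} (c : ℂ) (M : Matrix (V × B) (V × B) ℂ) :
    ptranspose₁ (c • M) = c • ptranspose₁ M := by
  ext p q
  simp [ptranspose₁]

theorem pt_pt {V B : Type*} (M : Matrix (V × B) (V × B) ℂ) :
    ptranspose₁ (ptranspose₁ M) = M := by
  ext p q
  simp [ptranspose₁]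

theorem trace_ptrace {V B : Type*} [Fintype V] [Fintype B] (M : Matrix (V × B) (V × B) ℂ) :
    (ptrace₁ M).trace = M.trace := by
  simp only [ptrace₁, Matrix.trace, Matrix.diag_apply, Matrix.of_apply, Fintype.sum_prod_type]
  rw [Finset.sum_comm]

theorem eps_to_tau {B X : Type*} [Fintype B] [DecidableEq B] (n : ℕ)
    (ρ : Matrix (Fin (n + 1) × B) (Fin (n + 1) × B) ℂ)
    (ω : X → Matrix (Fin (n + 1)) (Fin (n + 1)) ℂ) (hω : ∀ x, IsState (ω x))
    (c r : ℂ) (ρs : Matrix (Fin (n + 1) × B) (Fin (n + 1) × B) ℂ)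
    (hsep : Separable (c • (ρ + r • ρs))) :
    ∃ Ms : Fin (n + 1) × Fin (n + 1) → Matrix (Fin (n + 1) × B) (Fin (n + 1) × B) ℂ,
      (∀ a, (Ms a).PosSemidef ∧ Separable (Ms a)) ∧
      (∀ a x, c • (teleA (bellPOVM (n + 1) a) ρ (ω x) +
          r • teleA (bellPOVM (n + 1) a) ρs (ω x)) =
        ptrace₁ (Ms a * (ω x ⊗ₖ (1 : Matrix B B ℂ)))) ∧
      (∀ x, (∑ a, Ms a) = (1 : Matrix (Fin (n + 1)) (Fin (n + 1)) ℂ) ⊗ₖ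
        (c • ((∑ a, teleA (bellPOVM (n + 1) a) ρ (ω x)) +
          r • ∑ a, teleA (bellPOVM (n + 1) a) ρs (ω x)))) := by
  have hS : ∀ a, Separable (chanOp (bellPOVM (n + 1) a) (c • (ρ + r • ρs))) := by
    intro a
    rw [chanOp_bell]
    exact (hsep.pt'.cj' _).smul' _ (by positivity)
  refine ⟨fun a => chanOp (bellPOVM (n + 1) a) (c • (ρ + r • ρs)),
    fun a => ⟨(hS a).posSemidef', hS a⟩, fun a x => ?_, fun x => ?_⟩
  · simp only [teleA_eq, chanOp_smul, chanOp_add, Matrix.smul_mul, Matrix.add_mul, ptrace_smul,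
      ptrace_add]
  · rw [chanOp_sum_left, bell_sum, chanOp_one, sum_teleA _ (bell_sum n) _ _ (hω x).2,
      sum_teleA _ (bell_sum n) _ _ (hω x).2, ptrace_smul, ptrace_add, ptrace_smul]

theorem tau_to_eps {B X : Type*} [Fintype B] [DecidableEq B] (n m : ℕ)
    (ρ : Matrix (Fin (n + 1) × B) (Fin (n + 1) × B) ℂ)
    (ω : X → Matrix (Fin (n + 1)) (Fin (n + 1)) ℂ) (htomo : TomoComplete ω)
    (c r : ℂ) (ρs : Matrix (Fin m × B) (Fin m × B) ℂ) (hs : IsState ρs)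
    (N : Fin (n + 1) × Fin (n + 1) → Matrix (Fin (n + 1) × Fin m) (Fin (n + 1) × Fin m) ℂ)
    (hN : ∀ a, (N a).PosSemidef) (hN1 : ∑ a, N a = 1)
    (Ms : Fin (n + 1) × Fin (n + 1) → Matrix (Fin (n + 1) × B) (Fin (n + 1) × B) ℂ)
    (hMs : ∀ a, Separable (Ms a))
    (heq : ∀ a x, c • (teleA (bellPOVM (n + 1) a) ρ (ω x) + r • teleA (N a) ρs (ω x)) =
        ptrace₁ (Ms a * (ω x ⊗ₖ (1 : Matrix B B ℂ)))) :
    ∃ σ : Matrix (Fin (n + 1) × B) (Fin (n + 1) × B) ℂ, IsState σ ∧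
      Separable (c • (ρ + r • σ)) := by
  have hn : ((n + 1 : ℕ) : ℂ) ≠ 0 := by exact_mod_cast n.succ_ne_zero
  have hn' : (0 : ℂ) ≤ ((n + 1 : ℕ) : ℂ)⁻¹ := by positivity
  have key : ∀ a, Ms a = c • (((n + 1 : ℕ) : ℂ)⁻¹ • cj (HW (n + 1) a) (ptranspose₁ ρ) +
      r • chanOp (N a) ρs) := by
    intro a
    refine tomo_inj ω htomo _ _ fun x => ?_
    rw [← chanOp_bell, ← heq]
    simp only [teleA_eq, Matrix.smul_mul, Matrix.add_mul, ptrace_smul, ptrace_add]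
  have hU : ∀ a, ((HW (n + 1) a)ᴴ)ᴴ * (HW (n + 1) a)ᴴ = 1 := fun a => by
    rw [conjTranspose_conjTranspose]
    exact mul_eq_one_comm.mp (HW_unitary n a)
  refine ⟨((n + 1 : ℕ) : ℂ)⁻¹ • ∑ a, ptranspose₁ (cj (HW (n + 1) a)ᴴ (chanOp (N a) ρs)),
    ⟨?_, ?_⟩, ?_⟩
  · refine (Matrix.posSemidef_sum _ fun a _ => ?_).smul hn'
    rw [ptranspose_cj]
    exact posSemidef_cj _ _ (posSemidef_ptranspose_chanOp _ _ (hN a) hs.1)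
  · rw [Matrix.trace_smul, Matrix.trace_sum]
    simp only [trace_ptranspose, trace_cj _ (hU _)]
    rw [← Matrix.trace_sum, chanOp_sum_left, hN1, chanOp_one, Matrix.trace_kronecker,
      trace_ptrace, hs.2, Matrix.trace_one, Fintype.card_fin, mul_one, smul_eq_mul,
      inv_mul_cancel₀ hn]
  · have e : c • (ρ + r • ((n + 1 : ℕ) : ℂ)⁻¹ •
        ∑ a, ptranspose₁ (cj (HW (n + 1) a)ᴴ (chanOp (N a) ρs))) =
        ((n + 1 : ℕ) : ℂ)⁻¹ • ∑ a, ptranspose₁ (cj (HW (n + 1) a)ᴴ (Ms a)) := by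
      simp only [key, cj_smul, cj_add, cj_cj _ (HW_unitary n _), pt_smul, pt_add, pt_pt]
      rw [← Finset.smul_sum, Finset.sum_add_distrib, Finset.sum_const, ← Finset.smul_sum,
        Finset.card_univ, Fintype.card_prod, Fintype.card_fin, ← Nat.cast_smul_eq_nsmul ℂ]
      generalize ∑ a, ptranspose₁ (cj (HW (n + 1) a)ᴴ (chanOp (N a) ρs)) = T
      ext p q
      simp only [Matrix.smul_apply, Matrix.add_apply, smul_eq_mul]
      push_cast at hn ⊢
      field_simp
    rw [e]
    exact (Separable.sum' _ fun a => ((hMs a).cj' _).pt').smul' _ hn'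

end helpers

/-- for a full Bell state measurement and tomographically complete inputs,
τ_gen({σ_{a|ω_x}}) = ε_gen(ρ^{AB}). -/
theorem tauGen_eq_epsGen {B X : Type*} [Fintype B] [DecidableEq B]
    (d : ℕ) (hd : 1 ≤ d)
    (ρ : Matrix (Fin d × B) (Fin d × B) ℂ) (hρ : IsState ρ)
    (ω : X → Matrix (Fin d) (Fin d) ℂ) (hω : ∀ x, IsState (ω x))
    (htomo : TomoComplete ω) :
    tauGen ω (fun (a : Fin d × Fin d) x => teleA (bellPOVM d a) ρ (ω x)) = epsGen ρ := by
  obtain ⟨n, rfl⟩ : ∃ n, d = n + 1 := ⟨d - 1, by omega⟩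
  unfold tauGen epsGen
  congr 1
  ext r
  constructor
  · rintro ⟨h0, m, ρs, N, Ms, hs, hN, hN1, hMs, heq, -⟩
    exact ⟨h0, tau_to_eps n m ρ ω htomo _ _ ρs hs N hN hN1 Ms (fun a => (hMs a).2) heq⟩
  · rintro ⟨h0, ρs, hs, hsep⟩
    obtain ⟨Ms, h1, h2, h3⟩ := eps_to_tau n ρ ω hω _ _ ρs hsep
    exact ⟨h0, n + 1, ρs, fun a => bellPOVM (n + 1) a, Ms, hs, bell_psd _, bell_sum n, h1, h2, h3⟩

end Tele
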